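/- For every real z with 0 ≤ z ≤ 1, ∫₀^z [((2/π)·K(k₂(t)))² − 1]/t dt = (z²/16)·₅F₄(1,1,3/2,3/2,3/2; 2,2,2,2; z²), where k₂(t) = √((1 − √(1−t²))/2) and K is the complete elliptic integral of the first kind. -/

import Mathlib

/-!
With `m = k₂(t)²` one has `t² = 4m(1-m)`, and the integrand is computed by three classical facts.

* `ellipticK_series`: expanding `1/√(1 - m sin²θ)` by the binomial series and integrating termwise
  with Wallis' formula, `(2/π) K(√m) = ∑ ((1/2)ₙ/n!)² mⁿ`, that is `₂F₁(1/2,1/2;1;m)`.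
* `quadratic_transformation`: this equals `₂F₁(1/4,1/4;1;4m(1-m))` for `0 ≤ m < 1/2`. Both sides
  solve `(m(1-m)d')' = d/4`, agree at `0`, and are regular there; `regular_solution_zero` says
  that a regular solution vanishing at the singular point `0` is zero.
* `clausen`: the square of `₂F₁(1/4,1/4;1;x)` is `∑ ((1/2)ₙ/n!)³ xⁿ`. On formal power series, the
  square satisfies a third-order equation whose coefficient recurrence has only two terms.

Hence the integrand is `∑ ((1/2)ₙ₊₁/(n+1)!)³ t^(2n+1)` for `0 < t < 1` (`green_sub_one_div`).
All terms are nonnegative and, since `((1/2)ₙ/n!)² ≤ 1/(2n+1)`, the integrated series converges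
even at `z = 1`, so termwise integration is legitimate and gives the `₅F₄` series term by term.
-/

open Real Finset

/-- The complete elliptic integral of the first kind
`K(k) = ∫₀^{π/2} dθ/√(1 − k² sin²θ)`. -/
noncomputable def ellipticK (k : ℝ) : ℝ :=
  ∫ θ in (0:ℝ)..(π/2), 1 / Real.sqrt (1 - k ^ 2 * Real.sin θ ^ 2)

/-- Pochhammer symbol `(a)ₙ = a(a+1)⋯(a+n−1) = Γ(a+n)/Γ(a)`. -/
noncomputable def poch (a : ℝ) (n : ℕ) : ℝ := ∏ i ∈ Finset.range n, (a + i)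

/-- The generalized hypergeometric function `₅F₄(1,1,3/2,3/2,3/2; 2,2,2,2; z)`. -/
noncomputable def F54 (z : ℝ) : ℝ :=
  ∑' n : ℕ, (poch 1 n * poch 1 n * poch (3/2) n * poch (3/2) n * poch (3/2) n) /
      (poch 2 n * poch 2 n * poch 2 n * poch 2 n) * z ^ n / (n.factorial : ℝ)

/-! ### Power series with polynomially growing coefficients -/

/-- The sum of the power series with coefficients `c`. -/
noncomputable def psum (c : ℕ → ℝ) (x : ℝ) : ℝ := ∑' n, c n * x ^ n

/-- Coefficients of the formal derivative. -/
def dcoef (c : ℕ → ℝ) (n : ℕ) : ℝ := (n + 1) * c (n + 1)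

/-- Polynomial growth: guarantees convergence of the power series and of all its formal derivatives
on the open unit interval. -/
def PolyGrowth (c : ℕ → ℝ) : Prop := ∃ (C : ℝ) (k : ℕ), ∀ n, |c n| ≤ C * ((n : ℝ) + 1) ^ k

lemma PolyGrowth.of_le_one {c : ℕ → ℝ} (h : ∀ n, |c n| ≤ 1) : PolyGrowth c :=
  ⟨1, 0, by simpa using h⟩

lemma PolyGrowth.dcoef {c : ℕ → ℝ} (h : PolyGrowth c) : PolyGrowth (dcoef c) := by
  obtain ⟨C, k, h⟩ := h
  have hC : 0 ≤ C := by simpa using (abs_nonneg _).trans (h 0)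
  refine ⟨C * 2 ^ k, k + 1, fun n => ?_⟩
  have h1 := h (n + 1)
  have hn : (0:ℝ) ≤ n := n.cast_nonneg
  unfold _root_.dcoef
  rw [abs_mul, abs_of_nonneg (by positivity : (0:ℝ) ≤ n + 1)]
  calc ((n:ℝ) + 1) * |c (n + 1)| ≤ (n + 1) * (C * (2 * ((n:ℝ) + 1)) ^ k) := by
        gcongr
        refine h1.trans ?_
        push_cast
        gcongr
        linarith
    _ = C * 2 ^ k * ((n:ℝ) + 1) ^ (k + 1) := by rw [mul_pow]; ring

lemma PolyGrowth.summable_abs {c : ℕ → ℝ} (h : PolyGrowth c) {x : ℝ} (hx : |x| < 1) :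
    Summable fun n => |c n * x ^ n| := by
  obtain ⟨C, k, h⟩ := h
  have hC : 0 ≤ C := by simpa using (abs_nonneg _).trans (h 0)
  have hs : Summable fun n : ℕ => ((n:ℝ) ^ k * |x| ^ n) :=
    summable_pow_mul_geometric_of_norm_lt_one k (by simpa using hx)
  have hs0 : Summable fun n : ℕ => |x| ^ n := summable_geometric_of_lt_one (abs_nonneg _) hx
  refine Summable.of_nonneg_of_le (fun _ => abs_nonneg _) (fun n => ?_)
    ((hs.add hs0).mul_left (C * 2 ^ k))
  rw [abs_mul, abs_pow]
  have hle : ((n:ℝ) + 1) ^ k ≤ 2 ^ k * ((n:ℝ) ^ k + 1) := by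
    rcases Nat.eq_zero_or_pos n with rfl | hn
    · have : (1:ℝ) ≤ 2 ^ k := one_le_pow₀ (by norm_num)
      have h0 : (0:ℝ) ≤ (0:ℝ) ^ k := by positivity
      simp only [Nat.cast_zero, zero_add, one_pow]
      nlinarith
    · have hn' : (1:ℝ) ≤ n := by exact_mod_cast hn
      calc ((n:ℝ) + 1) ^ k ≤ (2 * (n:ℝ)) ^ k := by gcongr; linarith
        _ = 2 ^ k * (n:ℝ) ^ k := mul_pow ..
        _ ≤ _ := by gcongr; linarith
  calc |c n| * |x| ^ n ≤ (C * (2 ^ k * ((n:ℝ) ^ k + 1))) * |x| ^ n := by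
        gcongr
        exact (h n).trans (by gcongr)
    _ = _ := by ring

lemma PolyGrowth.hasSum {c : ℕ → ℝ} (h : PolyGrowth c) {x : ℝ} (hx : |x| < 1) :
    HasSum (fun n => c n * x ^ n) (psum c x) :=
  (h.summable_abs hx).of_abs.hasSum

lemma PolyGrowth.hasSum_shift {c : ℕ → ℝ} (h : PolyGrowth c) {x : ℝ} (hx : |x| < 1) :
    HasSum (fun n => n * c n * x ^ n) (x * psum (_root_.dcoef c) x) := by
  rw [← hasSum_nat_add_iff' 1]
  convert! (h.dcoef.hasSum hx).mul_left x using 1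
  · ext n; simp [_root_.dcoef]; ring
  · simp

lemma PolyGrowth.hasDerivAt {c : ℕ → ℝ} (h : PolyGrowth c) {x : ℝ} (hx : |x| < 1) :
    HasDerivAt (psum c) (psum (_root_.dcoef c) x) x := by
  obtain ⟨r, hxr, hr⟩ := exists_between hx
  have hr0 : 0 < r := (abs_nonneg x).trans_lt hxr
  have hrabs : |r| < 1 := by rwa [abs_of_pos hr0]
  have hu : Summable fun n => |(n * c n * r ^ n)| / r :=
    ((h.hasSum_shift hrabs).summable.abs).div_const r
  have key := hasDerivAt_tsum_of_isPreconnected (g := fun n (y : ℝ) => c n * y ^ n)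
    (g' := fun n (y : ℝ) => c n * (n * y ^ (n - 1))) (t := Metric.ball 0 r) (y₀ := 0) (y := x)
    hu Metric.isOpen_ball (convex_ball _ _).isPreconnected
    (fun n y _ => (hasDerivAt_pow n y).const_mul (c n)) (fun n y hy => ?_)
    (Metric.mem_ball_self hr0) (h.hasSum (by simp)).summable (by simpa using hxr)
  · refine key.congr_deriv ?_
    unfold psum
    rw [Summable.tsum_eq_zero_add (f := fun n => c n * (n * x ^ (n - 1)))]
    · simp only [Nat.cast_zero, zero_mul, mul_zero, zero_add, Nat.add_sub_cancel, _root_.dcoef]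
      refine tsum_congr fun n => ?_
      push_cast; ring
    · rw [← summable_nat_add_iff 1]
      convert! (h.dcoef.hasSum hx).summable using 1
      ext n; simp [_root_.dcoef]; ring
  · rcases n with _ | n
    · simp
    · have hy' : |y| ≤ r := by simpa using (Metric.mem_ball.1 hy).le
      rw [Real.norm_eq_abs, le_div_iff₀ hr0]
      simp only [Nat.add_sub_cancel, abs_mul, abs_pow, abs_of_pos hr0]
      calc |c (n+1)| * (|((n+1:ℕ):ℝ)| * |y| ^ n) * r
          ≤ |c (n+1)| * (|((n+1:ℕ):ℝ)| * r ^ n) * r := by gcongr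
        _ = _ := by ring

/-- A two-term recurrence `(n+1)² c_{n+1} = (n² + s n + q) c_n` translates into the hypergeometric
differential equation. -/
lemma hypergeom_ode {c : ℕ → ℝ} (h : PolyGrowth c) {s q : ℝ}
    (hrec : ∀ n : ℕ, ((n:ℝ) + 1) ^ 2 * c (n + 1) = ((n:ℝ) ^ 2 + s * n + q) * c n)
    {x : ℝ} (hx : |x| < 1) :
    x * (1 - x) * psum (dcoef (dcoef c)) x + (1 - (1 + s) * x) * psum (dcoef c) x
      - q * psum c x = 0 := by
  have e0 := h.hasSum hx
  have e1 := h.dcoef.hasSum hx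
  have e1' := h.hasSum_shift hx
  have e2' := h.dcoef.hasSum_shift hx
  have e2'' : HasSum (fun n : ℕ => (n:ℝ) * (n - 1) * c n * x ^ n)
      (x * (x * psum (dcoef (dcoef c)) x)) := by
    rw [← hasSum_nat_add_iff' 1]
    convert! e2'.mul_left x using 1
    · ext n; simp [dcoef]; ring
    · simp
  have := (((e2'.sub e2'').add e1).sub (e1'.mul_left (1 + s))).sub (e0.mul_left q)
  refine Eq.trans ?_ (this.unique (hasSum_zero.congr_fun fun n => ?_))
  · ring
  · simp only [dcoef]
    linear_combination (x ^ n) * hrec n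

/-! ### Uniqueness at the singular point -/

/-- Uniqueness for the solution of `(m(1-m)d')' = d/4` that is regular at the singular point `0`:
integrating twice bounds `max |d|` on `[0, r]`, `r < 1/2`, by a quarter of itself. -/
lemma regular_solution_zero {d d1 d2 : ℝ → ℝ}
    (h1 : ∀ m, 0 ≤ m → m < 1/2 → HasDerivAt d (d1 m) m)
    (h2 : ∀ m, 0 ≤ m → m < 1/2 → HasDerivAt d1 (d2 m) m)
    (hode : ∀ m, 0 ≤ m → m < 1/2 → m * (1 - m) * d2 m + (1 - 2 * m) * d1 m - 1/4 * d m = 0)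
    (h0 : d 0 = 0) {r : ℝ} (hr0 : 0 ≤ r) (hr : r < 1/2) : d r = 0 := by
  have hcont : ContinuousOn (fun m => |d m|) (Set.Icc 0 r) := fun m hm =>
    ((h1 m hm.1 (hm.2.trans_lt hr)).continuousAt.abs).continuousWithinAt
  obtain ⟨m0, hm0, hmax⟩ := isCompact_Icc.exists_isMaxOn ⟨0, Set.left_mem_Icc.2 hr0⟩ hcont
  set M := |d m0| with hM
  have hle : ∀ m ∈ Set.Icc 0 r, |d m| ≤ M := fun m hm => hmax hm
  have hM0 : 0 ≤ M := abs_nonneg _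
  have hpsi : ∀ m ∈ Set.Icc 0 r, |m * (1 - m) * d1 m| ≤ M / 4 * m := by
    intro m hm
    have := (convex_Icc (0:ℝ) r).norm_image_sub_le_of_norm_hasDerivWithin_le
      (f := fun m => m * (1 - m) * d1 m) (f' := fun m => d m / 4) (C := M / 4)
      (x := 0) (y := m) (fun x hx => ?_) (fun x hx => ?_) (Set.left_mem_Icc.2 hr0) hm
    · simpa [abs_of_nonneg hm.1] using this
    · have hd := ((hasDerivAt_id x).mul ((hasDerivAt_id x).const_sub 1)).mul
        (h2 x hx.1 (hx.2.trans_lt hr))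
      refine (hd.congr_deriv ?_).hasDerivWithinAt
      have := hode x hx.1 (hx.2.trans_lt hr)
      simp only [id, Pi.mul_apply]
      linear_combination this
    · rw [Real.norm_eq_abs, abs_div, abs_of_pos (by norm_num : (0:ℝ) < 4)]
      have := hle x hx
      linarith
  have hd1 : ∀ m ∈ Set.Icc 0 r, |d1 m| ≤ M / 2 := by
    intro m hm
    rcases hm.1.eq_or_lt with rfl | hpos
    · have := hode 0 le_rfl (by norm_num)
      have h10 : d1 0 = 0 := by rw [h0] at this; linarith
      rw [h10, abs_zero]; linarith
    · have := hpsi m hm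
      have hmr := hm.2
      rw [abs_mul, abs_mul, abs_of_pos hpos, abs_of_pos (by linarith : 0 < 1 - m)] at this
      have h3 : (1 - m) * |d1 m| ≤ M / 4 := by
        refine le_of_mul_le_mul_left ?_ hpos
        linarith
      nlinarith [abs_nonneg (d1 m)]
  have hfin := (convex_Icc (0:ℝ) r).norm_image_sub_le_of_norm_hasDerivWithin_le
    (f := d) (f' := d1) (C := M / 2) (x := 0) (y := m0)
    (fun x hx => (h1 x hx.1 (hx.2.trans_lt hr)).hasDerivWithinAt)
    (fun x hx => by simpa using hd1 x hx) (Set.left_mem_Icc.2 hr0) hm0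
  rw [h0, sub_zero, sub_zero, Real.norm_eq_abs, Real.norm_eq_abs, abs_of_nonneg hm0.1] at hfin
  have hm0r := hm0.2
  have : M = 0 := by nlinarith
  have := hle r (Set.right_mem_Icc.2 hr0)
  exact abs_eq_zero.1 (le_antisymm (by linarith) (abs_nonneg _))

/-! ### The coefficient sequences and the quadratic transformation -/

/-- `wal n = (1/2)_n / n!`, as a product of Wallis factors. -/
noncomputable def wal (n : ℕ) : ℝ := ∏ i ∈ Finset.range n, (2 * (i:ℝ) + 1) / (2 * i + 2)

/-- `qua n = ((1/4)_n / n!)²`, the coefficients of `₂F₁(1/4, 1/4; 1; ·)`. -/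
noncomputable def qua (n : ℕ) : ℝ := ∏ i ∈ Finset.range n, ((4 * (i:ℝ) + 1) / (4 * i + 4)) ^ 2

lemma wal_succ (n : ℕ) : wal (n + 1) = wal n * ((2 * (n:ℝ) + 1) / (2 * n + 2)) :=
  Finset.prod_range_succ _ _

lemma qua_succ (n : ℕ) : qua (n + 1) = qua n * ((4 * (n:ℝ) + 1) / (4 * n + 4)) ^ 2 :=
  Finset.prod_range_succ _ _

lemma wal_nonneg (n : ℕ) : 0 ≤ wal n := Finset.prod_nonneg fun i _ => by positivity

lemma wal_le_one (n : ℕ) : wal n ≤ 1 :=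
  Finset.prod_le_one (fun i _ => by positivity) fun i _ => by
    rw [div_le_one (by positivity)]; linarith

lemma qua_nonneg (n : ℕ) : 0 ≤ qua n := Finset.prod_nonneg fun i _ => by positivity

lemma qua_le_one (n : ℕ) : qua n ≤ 1 :=
  Finset.prod_le_one (fun i _ => by positivity) fun i _ =>
    pow_le_one₀ (by positivity) (by rw [div_le_one (by positivity)]; linarith)

lemma wal_sq_le (n : ℕ) : wal n ^ 2 ≤ 1 / (2 * n + 1) := by
  induction n with
  | zero => simp [wal]
  | succ n ih =>
    rw [wal_succ, mul_pow]
    push_cast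
    have hn : (0:ℝ) ≤ n := n.cast_nonneg
    calc wal n ^ 2 * ((2 * (n:ℝ) + 1) / (2 * n + 2)) ^ 2
        ≤ 1 / (2 * n + 1) * ((2 * (n:ℝ) + 1) / (2 * n + 2)) ^ 2 := by gcongr
      _ = (2 * (n:ℝ) + 1) / (2 * n + 2) ^ 2 := by field_simp
      _ ≤ _ := by
        rw [div_le_div_iff₀ (by positivity) (by positivity)]
        nlinarith

lemma polyGrowth_wal : PolyGrowth wal :=
  .of_le_one fun n => by rw [abs_of_nonneg (wal_nonneg n)]; exact wal_le_one n

lemma polyGrowth_wal_pow (k : ℕ) : PolyGrowth fun n => wal n ^ k :=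
  .of_le_one fun n => by
    rw [abs_of_nonneg (pow_nonneg (wal_nonneg n) _)]
    exact pow_le_one₀ (wal_nonneg n) (wal_le_one n)

lemma polyGrowth_qua : PolyGrowth qua :=
  .of_le_one fun n => by rw [abs_of_nonneg (qua_nonneg n)]; exact qua_le_one n

lemma psum_zero (c : ℕ → ℝ) : psum c 0 = c 0 := by
  unfold psum
  rw [tsum_eq_single 0 (by intro n hn; simp [hn])]
  simp

lemma wal_sq_rec (n : ℕ) :
    ((n:ℝ) + 1) ^ 2 * wal (n + 1) ^ 2 = ((n:ℝ) ^ 2 + 1 * n + 1/4) * wal n ^ 2 := by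
  rw [wal_succ]; field_simp; ring

lemma qua_rec (n : ℕ) :
    ((n:ℝ) + 1) ^ 2 * qua (n + 1) = ((n:ℝ) ^ 2 + 1/2 * n + 1/16) * qua n := by
  rw [qua_succ]; field_simp; ring

/-- The quadratic transformation `₂F₁(1/2,1/2;1;m) = ₂F₁(1/4,1/4;1;4m(1-m))`: both sides are
regular at `0` and solve the same second-order equation. -/
lemma quadratic_transformation {m : ℝ} (hm0 : 0 ≤ m) (hm : m < 1/2) :
    psum (fun n => wal n ^ 2) m = psum qua (4 * m * (1 - m)) := by
  set c : ℕ → ℝ := fun n => wal n ^ 2 with hc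
  have gc : PolyGrowth c := polyGrowth_wal_pow 2
  have gq := polyGrowth_qua
  have hx : ∀ m : ℝ, 0 ≤ m → m < 1/2 → |4 * m * (1 - m)| < 1 := fun m h0 h1 => by
    rw [abs_lt]; constructor <;> nlinarith
  have hmabs : ∀ m : ℝ, 0 ≤ m → m < 1/2 → |m| < 1 := fun m h0 h1 => by
    rw [abs_lt]; constructor <;> linarith
  have hin : ∀ m : ℝ, HasDerivAt (fun m : ℝ => 4 * m * (1 - m)) (4 * (1 - 2 * m)) m := fun m =>
    ((((hasDerivAt_id m).const_mul 4).mul ((hasDerivAt_id m).const_sub 1))).congr_deriv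
      (by simp only [id]; ring)
  have hin2 : ∀ m : ℝ, HasDerivAt (fun m : ℝ => 4 * (1 - 2 * m)) (-8) m := fun m =>
    ((((hasDerivAt_id m).const_mul 2).const_sub 1).const_mul 4).congr_deriv (by norm_num)
  have hF : ∀ m : ℝ, 0 ≤ m → m < 1/2 → HasDerivAt (fun m => psum qua (4 * m * (1 - m)))
      (psum (dcoef qua) (4 * m * (1 - m)) * (4 * (1 - 2 * m))) m := fun m h0 h1 =>
    HasDerivAt.comp m (gq.hasDerivAt (hx m h0 h1)) (hin m)
  have hF1 : ∀ m : ℝ, 0 ≤ m → m < 1/2 → HasDerivAt (fun m => psum (dcoef qua) (4 * m * (1 - m)))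
      (psum (dcoef (dcoef qua)) (4 * m * (1 - m)) * (4 * (1 - 2 * m))) m := fun m h0 h1 =>
    HasDerivAt.comp m (gq.dcoef.hasDerivAt (hx m h0 h1)) (hin m)
  have key := regular_solution_zero
    (d := fun m => psum c m - psum qua (4 * m * (1 - m)))
    (d1 := fun m => psum (dcoef c) m - psum (dcoef qua) (4 * m * (1 - m)) * (4 * (1 - 2 * m)))
    (d2 := fun m => psum (dcoef (dcoef c)) m -
      (psum (dcoef (dcoef qua)) (4 * m * (1 - m)) * (4 * (1 - 2 * m)) * (4 * (1 - 2 * m))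
        + psum (dcoef qua) (4 * m * (1 - m)) * (-8)))
    (fun m h0 h1 => (gc.hasDerivAt (hmabs m h0 h1)).sub
      (hF m h0 h1))
    (fun m h0 h1 => (gc.dcoef.hasDerivAt (hmabs m h0 h1)).sub
      ((hF1 m h0 h1).mul (hin2 m)))
    (fun m h0 h1 => ?_) ?_ hm0 hm
  · exact sub_eq_zero.1 key
  · have e1 := hypergeom_ode gc (fun n => wal_sq_rec n) (hmabs m h0 h1)
    have e2 := hypergeom_ode gq (fun n => qua_rec n) (hx m h0 h1)
    linear_combination e1 - 4 * e2
  · simp [psum_zero, hc, wal, qua]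

/-! ### Clausen's identity -/

/-- Clausen's identity at the level of coefficients. The square `h` of the formal solution `F` of
the hypergeometric equation satisfies the third-order symmetric square equation, which is the
two-term recurrence `(n+1)³ hₙ₊₁ = (n+1/2)³ hₙ`. -/
lemma clausen_coeff (n : ℕ) :
    ∑ kl ∈ Finset.HasAntidiagonal.antidiagonal n, qua kl.1 * qua kl.2 = wal n ^ 3 := by
  open PowerSeries in
  set F : PowerSeries ℝ := PowerSeries.mk qua with hF
  set D := PowerSeries.derivative (R := ℝ) with hD
  have hode : X * D (D F) - X * (X * D (D F)) + D F - C (3/2 : ℝ) * (X * D F)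
      - C (1/16 : ℝ) * F = 0 := by
    ext n
    have hr := qua_rec n
    rcases n with _ | _ | n <;>
    simp only [hF, hD, map_sub, map_add, coeff_derivative, coeff_succ_X_mul, coeff_zero_X_mul,
      coeff_C_mul, coeff_mk, map_zero] <;> push_cast at hr ⊢ <;> linear_combination hr
  have hode' := congrArg D hode
  have hDX : D X = 1 := derivative_X
  have hDC : ∀ r : ℝ, D (C r) = 0 := fun r => by simp [hD]
  simp only [map_sub, map_add, map_zero, Derivation.leibniz, smul_eq_mul, hDX, hDC]
    at hode'
  set h := F * F with hh
  have hC1 : (C (3/2 : ℝ)) = 24 * C (1/16 : ℝ) := by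
    rw [← map_ofNat C 24, ← map_mul]; norm_num
  have h1 : D h = F * D F + F * D F := by simp only [hh, Derivation.leibniz, smul_eq_mul]
  have h2 : D (D h) = 2 * (D F * D F + F * D (D F)) := by
    rw [h1]; simp only [map_add, Derivation.leibniz, smul_eq_mul]; ring
  have h3 : D (D (D h)) = 6 * (D F * D (D F)) + 2 * (F * D (D (D F))) := by
    rw [h2, two_mul]; simp only [map_add, Derivation.leibniz, smul_eq_mul]; ring
  have hode3 : X * (X * D (D (D h))) - X * (X * (X * D (D (D h)))) + C (3:ℝ) * (X * D (D h))
      - C (9/2 : ℝ) * (X * (X * D (D h))) + D h - C (13/4 : ℝ) * (X * D h)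
      - C (1/8 : ℝ) * h = 0 := by
    have hC2 : 16 * C (1/16 : ℝ) = 1 := by
      rw [← map_ofNat C 16, ← map_mul]; norm_num
    have hC3 : (C (13/4 : ℝ)) = 52 * C (1/16 : ℝ) := by
      rw [← map_ofNat C 52, ← map_mul]; norm_num
    have hC4 : (C (1/8 : ℝ)) = 2 * C (1/16 : ℝ) := by
      rw [← map_ofNat C 2, ← map_mul]; norm_num
    have hC5 : (C (9/2 : ℝ)) = 72 * C (1/16 : ℝ) := by
      rw [← map_ofNat C 72, ← map_mul]; norm_num
    rw [h3, h2, h1, hC3, hC4, hC5, hh, map_ofNat C 3]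
    rw [hC1] at hode hode'
    generalize C (1/16 : ℝ) = e at *
    linear_combination 2 * X * F * hode' + (6 * X * D F + 2 * F) * hode
      - 6 * X ^ 2 * D (D F) * F * hC2
  have hrec : ∀ n : ℕ, ((n:ℝ) + 1) ^ 3 * coeff (n + 1) h = ((n:ℝ) + 1/2) ^ 3 * coeff n h := by
    intro n
    have hr := congrArg (coeff n) hode3
    rcases n with _ | _ | _ | n <;>
    simp only [hD, map_sub, map_add, coeff_derivative, coeff_succ_X_mul, coeff_zero_X_mul,
      coeff_C_mul, map_zero] at hr <;> push_cast at hr ⊢ <;> linear_combination hr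
  have hall : ∀ n, coeff n h = wal n ^ 3 := by
    intro n
    induction n with
    | zero => simp [hh, hF, qua, wal]
    | succ n ih =>
      have := hrec n
      rw [ih] at this
      refine mul_left_cancel₀ (b := coeff (n + 1) h) (a := ((n:ℝ) + 1) ^ 3) (by positivity) ?_
      rw [this, wal_succ]
      field_simp
  rw [← hall n, hh, coeff_mul]
  simp [hF]

lemma clausen {x : ℝ} (hx : |x| < 1) :
    psum qua x ^ 2 = psum (fun n => wal n ^ 3) x := by
  have hs : Summable fun n => ‖qua n * x ^ n‖ := polyGrowth_qua.summable_abs hx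
  have hprod := tsum_mul_tsum_eq_tsum_sum_antidiagonal_of_summable_norm hs hs
  have hterm : ∀ n : ℕ, ∑ kl ∈ Finset.HasAntidiagonal.antidiagonal n,
      qua kl.1 * x ^ kl.1 * (qua kl.2 * x ^ kl.2) = wal n ^ 3 * x ^ n := by
    intro n
    rw [← clausen_coeff n, Finset.sum_mul]
    refine Finset.sum_congr rfl fun kl hkl => ?_
    rw [← Finset.HasAntidiagonal.mem_antidiagonal.1 hkl, pow_add]
    ring
  rw [pow_two]
  exact hprod.trans (tsum_congr hterm)

/-! ### Power series of the elliptic integral -/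

/-- The binomial series at exponent `-1/2`: the equation `(1-y) f' = f/2` makes `f(y) √(1-y)`
constant. -/
lemma psum_wal {x : ℝ} (hx0 : 0 ≤ x) (hx : x < 1) : psum wal x = 1 / √(1 - x) := by
  have habs : ∀ y ∈ Set.Icc 0 x, |y| < 1 := fun y hy => by
    rw [abs_of_nonneg hy.1]; exact hy.2.trans_lt hx
  have hode : ∀ y : ℝ, |y| < 1 → (1 - y) * psum (dcoef wal) y = psum wal y / 2 := by
    intro y hy
    have e := ((polyGrowth_wal.dcoef.hasSum hy).sub (polyGrowth_wal.hasSum_shift hy)).sub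
      ((polyGrowth_wal.hasSum hy).mul_left (1/2))
    have := e.unique (hasSum_zero.congr_fun fun n => ?_)
    · linarith
    · simp only [dcoef, wal_succ]
      field_simp
      ring
  have key := (convex_Icc (0:ℝ) x).norm_image_sub_le_of_norm_hasDerivWithin_le
    (f := fun y => psum wal y * √(1 - y)) (f' := fun _ => 0) (C := 0) (x := 0) (y := x)
    (fun y hy => ?_) (fun y hy => by simp) (Set.left_mem_Icc.2 hx0) (Set.right_mem_Icc.2 hx0)
  · have h1 : psum wal 0 = 1 := by rw [psum_zero]; simp [wal]
    rw [zero_mul, norm_le_zero_iff, h1, sub_eq_zero] at key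
    rw [eq_div_iff (Real.sqrt_pos.2 (by linarith)).ne', key]
    simp
  · have hpos : 0 < 1 - y := by linarith [hy.2]
    have hd := (polyGrowth_wal.hasDerivAt (habs y hy)).mul
      (((hasDerivAt_id y).const_sub 1).sqrt hpos.ne')
    refine (hd.congr_deriv ?_).hasDerivWithinAt
    have hsq : √(1 - y) ^ 2 = 1 - y := Real.sq_sqrt hpos.le
    have hsp : 0 < √(1 - y) := Real.sqrt_pos.2 hpos
    have h := hode y (habs y hy)
    simp only [id]
    field_simp
    rw [hsq]
    linarith

lemma integral_sin_pow_quarter (n : ℕ) :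
    ∫ θ in (0:ℝ)..(π/2), Real.sin θ ^ (2 * n) = π / 2 * wal n := by
  have h1 := EulerSine.integral_cos_pow_eq (2 * n)
  have h2 := intervalIntegral.integral_comp_sub_left (a := 0) (b := π / 2)
    (fun x => Real.sin x ^ (2 * n)) (π / 2)
  simp only [Real.sin_pi_div_two_sub, sub_self, sub_zero] at h2
  rw [← h2, h1, integral_sin_pow_even, wal]
  ring

lemma ellipticK_series {m : ℝ} (hm0 : 0 ≤ m) (hm : m < 1) :
    2 / π * ellipticK (√m) = psum (fun n => wal n ^ 2) m := by
  have hmabs : |m| < 1 := by rwa [abs_of_nonneg hm0]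
  have hs := intervalIntegral.hasSum_integral_of_dominated_convergence (a := 0) (b := π / 2)
    (μ := MeasureTheory.volume)
    (F := fun (n : ℕ) (θ : ℝ) => wal n * (m * Real.sin θ ^ 2) ^ n)
    (f := fun θ => 1 / √(1 - m * Real.sin θ ^ 2)) (fun n _ => |wal n * m ^ n|)
    (fun n => (Continuous.aestronglyMeasurable (by fun_prop)))
    (fun n => .of_forall fun θ _ => ?_) (.of_forall fun θ _ => polyGrowth_wal.summable_abs hmabs)
    (by simp) (.of_forall fun θ _ => ?_)
  · have h2 : ∀ n : ℕ, ∫ θ in (0:ℝ)..(π/2), wal n * (m * Real.sin θ ^ 2) ^ n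
        = π / 2 * (wal n ^ 2 * m ^ n) := by
      intro n
      have : ∀ θ : ℝ, wal n * (m * Real.sin θ ^ 2) ^ n
          = (wal n * m ^ n) * Real.sin θ ^ (2 * n) := fun θ => by
        rw [mul_pow, ← pow_mul]; ring
      simp only [this]
      rw [intervalIntegral.integral_const_mul, integral_sin_pow_quarter]
      ring
    simp only [h2] at hs
    have h3 := hs.unique (((polyGrowth_wal_pow 2).hasSum hmabs).mul_left (π / 2))
    unfold ellipticK
    rw [Real.sq_sqrt hm0, h3]
    field_simp
  · rw [Real.norm_eq_abs, abs_mul, abs_mul, abs_pow, abs_pow, abs_mul,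
      abs_of_nonneg (sq_nonneg (Real.sin θ))]
    gcongr
    nlinarith [Real.sin_sq_le_one θ, abs_nonneg m]
  · have hs1 := Real.sin_sq_le_one θ
    have h0 : 0 ≤ m * Real.sin θ ^ 2 := by positivity
    have h1 : m * Real.sin θ ^ 2 < 1 := by nlinarith
    rw [← psum_wal h0 h1]
    exact polyGrowth_wal.hasSum (by rwa [abs_of_nonneg h0])

/-- The body-centred cubic lattice Green function as a `₃F₂` series. -/
lemma green_series {t : ℝ} (ht0 : 0 ≤ t) (ht : t < 1) :
    (2 / π * ellipticK (√((1 - √(1 - t ^ 2)) / 2))) ^ 2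
      = psum (fun n => wal n ^ 3) (t ^ 2) := by
  have h1 : 0 < 1 - t ^ 2 := by nlinarith
  have hs : 0 < √(1 - t ^ 2) := Real.sqrt_pos.2 h1
  have hs1 : √(1 - t ^ 2) ≤ 1 := Real.sqrt_le_one.2 (by nlinarith)
  have hsq : √(1 - t ^ 2) ^ 2 = 1 - t ^ 2 := Real.sq_sqrt h1.le
  rw [ellipticK_series (by linarith) (by linarith),
    quadratic_transformation (by linarith) (by linarith), clausen]
  · congr 1; linear_combination -hsq
  · rw [abs_lt]; constructor <;> nlinarith

lemma green_sub_one_div {t : ℝ} (ht0 : 0 < t) (ht : t < 1) :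
    HasSum (fun n : ℕ => wal (n + 1) ^ 3 * t ^ (2 * n + 1))
      (((2 / π * ellipticK (√((1 - √(1 - t ^ 2)) / 2))) ^ 2 - 1) / t) := by
  rw [green_series ht0.le ht]
  have hx : |t ^ 2| < 1 := by rw [abs_of_nonneg (sq_nonneg t)]; nlinarith
  have h := ((polyGrowth_wal_pow 3).hasSum hx)
  rw [← hasSum_nat_add_iff' 1] at h
  convert! h.div_const t using 1
  · ext n
    rw [← pow_mul]
    field_simp
    ring
  · simp [wal]

/-! ### The hypergeometric side and termwise integration -/

lemma poch_one (n : ℕ) : poch 1 n = n.factorial := by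
  induction n with
  | zero => simp [poch]
  | succ n ih =>
    rw [poch, Finset.prod_range_succ, ← poch, ih, Nat.factorial_succ]; push_cast; ring

lemma poch_two (n : ℕ) : poch 2 n = (n + 1) * n.factorial := by
  induction n with
  | zero => simp [poch]
  | succ n ih =>
    rw [poch, Finset.prod_range_succ, ← poch, ih, Nat.factorial_succ]; push_cast; ring

lemma poch_three_halves (n : ℕ) :
    poch (3/2) n = 2 * wal (n + 1) * ((n + 1) * n.factorial) := by
  induction n with
  | zero => simp [poch, wal]
  | succ n ih =>
    rw [poch, Finset.prod_range_succ, ← poch, ih, Nat.factorial_succ, wal_succ (n + 1)]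
    push_cast; field_simp; ring

lemma F54_term (z : ℝ) (n : ℕ) :
    z ^ 2 / 16 * ((poch 1 n * poch 1 n * poch (3/2) n * poch (3/2) n * poch (3/2) n) /
      (poch 2 n * poch 2 n * poch 2 n * poch 2 n) * (z ^ 2) ^ n / (n.factorial : ℝ))
    = wal (n + 1) ^ 3 * (z ^ (2 * n + 2) / (2 * n + 2)) := by
  have hf : (n.factorial : ℝ) ≠ 0 := by positivity
  rw [poch_one, poch_two, poch_three_halves, ← pow_mul]
  field_simp
  ring

lemma summable_wal_cube_div {z : ℝ} (hz0 : 0 ≤ z) (hz1 : z ≤ 1) :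
    Summable fun n : ℕ => wal (n + 1) ^ 3 * (z ^ (2 * n + 2) / (2 * n + 2)) := by
  have hs : Summable fun n : ℕ => 1 / (((n + 1 : ℕ) : ℝ)) ^ 2 :=
    (summable_nat_add_iff 1).2 (Real.summable_one_div_nat_pow.2 (by norm_num))
  refine Summable.of_nonneg_of_le (fun n => ?_) (fun n => ?_) hs
  · have := wal_nonneg (n + 1)
    positivity
  · have h1 := wal_sq_le (n + 1)
    have h0 := wal_nonneg (n + 1)
    have hle := wal_le_one (n + 1)
    push_cast at h1 ⊢
    have h3 : wal (n + 1) ^ 3 ≤ 1 / ((n:ℝ) + 1) := by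
      calc wal (n + 1) ^ 3 = wal (n + 1) ^ 2 * wal (n + 1) := by ring
        _ ≤ wal (n + 1) ^ 2 * 1 := by gcongr
        _ ≤ 1 / (2 * ((n:ℝ) + 1) + 1) := by linarith
        _ ≤ 1 / ((n:ℝ) + 1) := by
          apply one_div_le_one_div_of_le <;> linarith [(n.cast_nonneg : (0:ℝ) ≤ n)]
    calc wal (n + 1) ^ 3 * (z ^ (2 * n + 2) / (2 * n + 2))
        ≤ 1 / ((n:ℝ) + 1) * (1 / (n + 1)) := by
          gcongr
          · exact pow_le_one₀ hz0 hz1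
          · linarith [(n.cast_nonneg : (0:ℝ) ≤ n)]
          · norm_num
      _ = _ := by field_simp

/-- Integral of the body-centred cubic lattice Green function in
hypergeometric form. -/
theorem bcc_LGF_integral (z : ℝ) (hz0 : 0 ≤ z) (hz1 : z ≤ 1) :
    (∫ t in (0:ℝ)..z,
      (((2 / π) * ellipticK (Real.sqrt ((1 - Real.sqrt (1 - t ^ 2)) / 2))) ^ 2 - 1) / t) =
    (z ^ 2 / 16) * F54 (z ^ 2) := by
  have hint : ∀ n : ℕ, ∫ t in (0:ℝ)..z, wal (n + 1) ^ 3 * t ^ (2 * n + 1)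
      = wal (n + 1) ^ 3 * (z ^ (2 * n + 2) / (2 * n + 2)) := by
    intro n
    rw [intervalIntegral.integral_const_mul, integral_pow]
    push_cast
    norm_num
    left; ring
  have hsum := summable_wal_cube_div hz0 hz1
  have hmain := MeasureTheory.hasSum_integral_of_summable_integral_norm
    (μ := MeasureTheory.volume.restrict (Set.Ioc 0 z))
    (F := fun (n : ℕ) (t : ℝ) => wal (n + 1) ^ 3 * t ^ (2 * n + 1))
    (fun n => ?_) ?_
  · simp only [← intervalIntegral.integral_of_le hz0, hint] at hmain
    have hcongr : (∫ t in (0:ℝ)..z,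
        (((2 / π) * ellipticK (√((1 - √(1 - t ^ 2)) / 2))) ^ 2 - 1) / t)
        = ∫ t in (0:ℝ)..z, ∑' n : ℕ, wal (n + 1) ^ 3 * t ^ (2 * n + 1) := by
      -- the series representation may fail at the endpoint `t = 1`, a null set
      refine intervalIntegral.integral_congr_ae ?_
      have hne : ∀ᵐ t : ℝ, t ≠ 1 := by
        simp [MeasureTheory.ae_iff, MeasureTheory.measure_singleton]
      filter_upwards [hne] with t ht hmem
      rw [Set.uIoc_of_le hz0] at hmem
      exact (green_sub_one_div hmem.1 (lt_of_le_of_ne (hmem.2.trans hz1) ht)).tsum_eq.symm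
    rw [hcongr, ← hmain.tsum_eq, F54, ← tsum_mul_left]
    exact tsum_congr fun n => (F54_term z n).symm
  · exact (Continuous.integrableOn_Icc (by fun_prop)).mono_set Set.Ioc_subset_Icc_self
  · convert! hsum using 1
    ext n
    rw [← hint n, intervalIntegral.integral_of_le hz0]
    refine MeasureTheory.setIntegral_congr_fun measurableSet_Ioc fun t ht => ?_
    exact Real.norm_of_nonneg
      (mul_nonneg (pow_nonneg (wal_nonneg _) _) (pow_nonneg ht.1.le _))
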